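/- Let S be a polynomial ring over a field k, let x, y be linearly independent linear forms in S, and let J = (q_1, …, q_t) ⊆ S be an ideal generated by homogeneous quadrics with J ⊆ (x,y). Write q_i = a_i x + b_i y with a_i, b_i linear forms, and set m = (x, y, a_1, …, a_t, b_1, …, b_t). Then every associated prime p of S/J with p ≠ m satisfies height(p) ≤ t. -/

import Mathlib

open CategoryTheory Opposite

universe u

/-- The height of an ideal: the infimum of the heights (in the prime spectrum,
ordered by inclusion) of the primes containing it. -/
noncomputable def Ideal.heightENat {R : Type u} [CommRing R] (I : Ideal R) : ℕ∞ :=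
  ⨅ (p : PrimeSpectrum R) (_ : I ≤ p.asIdeal), Order.height p

/-- The projective dimension of an `R`-module `M`: the least `n` such that
`Ext^i(M, N) = 0` for all `i > n` and all modules `N` (and `⊤` if no such `n` exists). -/
noncomputable def projDim (R : Type u) [CommRing R] (M : Type u) [AddCommGroup M]
    [Module R M] : ℕ∞ :=
  sInf ((↑) '' {n : ℕ | ∀ i : ℕ, n < i → ∀ N : ModuleCat.{u} R,
    Subsingleton (((Ext R (ModuleCat.{u} R) i).obj (op (ModuleCat.of R M))).obj N)})

/-- The Hilbert function of the standard graded ring `S/J`, where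
`S = k[x_1, ..., x_N]`: the `k`-dimension of the degree-`d` graded piece of `S/J`. -/
noncomputable def hilbertFunction (k : Type u) [Field k] {N : ℕ}
    (J : Ideal (MvPolynomial (Fin N) k)) (d : ℕ) : ℕ :=
  Module.finrank k (Submodule.map (Ideal.Quotient.mkₐ k J).toLinearMap
    (MvPolynomial.homogeneousSubmodule (Fin N) k d))

open scoped Classical in
/-- The Hilbert–Samuel multiplicity `e(S/J)` of the graded ring `S/J`:
`(deg P)!` times the leading coefficient of the Hilbert polynomial `P` of `S/J`,
i.e. of the polynomial agreeing with the Hilbert function in all large degrees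
(the degree of the Hilbert polynomial being `dim(S/J) - 1`). -/
noncomputable def hilbertSamuelMultiplicity (k : Type u) [Field k] {N : ℕ}
    (J : Ideal (MvPolynomial (Fin N) k)) : ℚ :=
  if h : ∃ P : Polynomial ℚ, ∀ᶠ d : ℕ in Filter.atTop,
      (hilbertFunction k J d : ℚ) = P.eval (d : ℚ)
  then (h.choose.natDegree).factorial * h.choose.leadingCoeff
  else 0

structure AssP {R : Type*} [CommRing R] (P J : Ideal R) : Prop where
  prime : P.IsPrime
  ex : ∃ f, ∀ r, r ∈ P ↔ r * f ∈ J

theorem AssP.of_mul {R : Type*} [CommRing R] {P J K : Ideal R} (h : AssP P J) (a : R)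
    (ha : a ∉ P) (hKJ : K ≤ J) (haJ : ∀ r ∈ J, a * r ∈ K) : AssP P K := by
  obtain ⟨hP, f, hf⟩ := h
  refine ⟨hP, a * f, fun r => ⟨fun hr => ?_, fun hr => ?_⟩⟩
  · have := haJ _ ((hf r).1 hr)
    convert this using 1; ring
  · have h1 : (r * a) * f ∈ J := by
      have := hKJ hr
      convert this using 1; ring
    exact (hP.mem_or_mem ((hf _).2 h1)).resolve_right ha

theorem AssP.eq_of_prime {R : Type*} [CommRing R] {P J : Ideal R} (h : AssP P J)
    (hJ : J.IsPrime ∨ J = ⊤) : P = J := by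
  obtain ⟨hP, f, hf⟩ := h
  have hfJ : f ∉ J := fun hfJ => hP.ne_top ((Ideal.eq_top_iff_one _).2 ((hf 1).2 (by simpa using hfJ)))
  rcases hJ with hJ | rfl
  · ext r
    rw [hf]
    exact ⟨fun h => (hJ.mem_or_mem h).resolve_right hfJ, fun h => J.mul_mem_right _ h⟩
  · simp at hfJ

theorem AssP.split {R : Type*} [CommRing R] {P J : Ideal R} (h : AssP P J) (y : R) (J' : Ideal R)
    (hJ' : ∀ r, r ∈ J' ↔ y * r ∈ J) : AssP P J' ∨ AssP P (J ⊔ Ideal.span {y}) := by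
  obtain ⟨hP, f, hf⟩ := h
  by_cases hg : ∃ g, g * f ∈ J ⊔ Ideal.span {y} ∧ g * f ∉ J
  · left
    obtain ⟨g, hg1, hg2⟩ := hg
    obtain ⟨j, hj, z, hz, hjz⟩ := Submodule.mem_sup.1 hg1
    obtain ⟨c, rfl⟩ := Ideal.mem_span_singleton'.1 hz
    have hgP : g ∉ P := fun h => hg2 ((hf g).1 h)
    refine ⟨hP, c, fun r => ?_⟩
    have h1 : r ∈ P ↔ (r * g) * f ∈ J := by
      rw [← hf]
      exact ⟨fun h => P.mul_mem_right _ h, fun h => (hP.mem_or_mem h).resolve_right hgP⟩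
    have h2 : y * (r * c) = (r * g) * f - r * j := by
      rw [mul_assoc r g f, ← hjz]; ring
    rw [h1, hJ', h2, Submodule.sub_mem_iff_left _ (J.mul_mem_left r hj)]
  · right
    push Not at hg
    exact ⟨hP, f, fun r => ⟨fun h => Ideal.mem_sup_left ((hf r).1 h), fun h => (hf r).2 (hg r h)⟩⟩

theorem height_le_of_prime_span {R : Type*} [CommRing R] [IsNoetherianRing R] {P : Ideal R}
    {ι : Type*} [Fintype ι] (v : ι → R) (hP : P.IsPrime) (h : P = Ideal.span (Set.range v)) :
    P.height ≤ Fintype.card ι := by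
  classical
  have h1 : P ∈ (Ideal.span ((Finset.univ.image v : Finset R) : Set R)).minimalPrimes := by
    have : Ideal.span ((Finset.univ.image v : Finset R) : Set R) = P := by simp [h]
    rw [this, Ideal.minimalPrimes_eq_subsingleton_self]
    rfl
  refine (Ideal.height_le_card_of_mem_minimalPrimes_span_finset h1).trans ?_
  exact_mod_cast Finset.card_image_le

theorem colon_aux {B L : Type*} [CommRing B] [IsDomain B] [IsPrincipalIdealRing B] [CommRing L]
    [Algebra B L] {ι : Type*} [Fintype ι] (w : ι → L)
    (H1 : ∀ T : Set ι, (Ideal.span (w '' T)).IsPrime ∨ Ideal.span (w '' T) = ⊤)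
    (H1' : ∀ (T : Set ι) (π : B), Prime π →
      Ideal.span (w '' T) = ⊤ ∨ algebraMap B L π ∉ Ideal.span (w '' T))
    (π : B) (hπ : Prime π) (d d' : ι → B)
    (h1 : ∀ i, π ∣ d i → d i = π * d' i) (h2 : ∀ i, ¬ π ∣ d i → d' i = d i) (r : L) :
    r ∈ Ideal.span (Set.range fun i => algebraMap B L (d' i) * w i) ↔
    algebraMap B L π * r ∈ Ideal.span (Set.range fun i => algebraMap B L (d i) * w i) := by
  classical
  constructor
  · intro h
    induction h using Submodule.span_induction with
    | mem x hx =>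
      obtain ⟨i, rfl⟩ := hx
      have hm : algebraMap B L (d i) * w i ∈
        Ideal.span (Set.range fun i => algebraMap B L (d i) * w i) := Ideal.subset_span ⟨i, rfl⟩
      by_cases hi : π ∣ d i
      · simp only [← mul_assoc, ← map_mul, ← h1 i hi]; exact hm
      · simp only [h2 i hi]; exact Ideal.mul_mem_left _ _ hm
    | zero => simp
    | add x y _ _ hx hy => rw [mul_add]; exact add_mem hx hy
    | smul a x _ hx => 
      rw [smul_eq_mul, mul_left_comm]; exact Ideal.mul_mem_left _ _ hx
  · intro h
    obtain ⟨c, hc⟩ := Ideal.mem_span_range_iff_exists_fun.1 h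
    set T : Finset ι := Finset.univ.filter (fun i => ¬ π ∣ d i) with hT
    set I : Ideal L := Ideal.span ((fun i => algebraMap B L (d i) * w i) '' (T : Set ι)) with hI
    set J' := Ideal.span (Set.range fun i => algebraMap B L (d' i) * w i) with hJ'
    have hIJ : I ≤ J' := by
      rw [hI, Ideal.span_le]
      rintro _ ⟨i, hi, rfl⟩
      have hi' : ¬ π ∣ d i := by simpa [hT] using hi
      have : algebraMap B L (d' i) * w i ∈ J' := Ideal.subset_span ⟨i, rfl⟩
      rw [h2 i hi'] at this
      exact this
    set s : L := ∑ i ∈ Finset.univ.filter (fun i => π ∣ d i), c i * (algebraMap B L (d' i) * w i)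
    have hs : s ∈ J' := Ideal.sum_mem _ fun i _ => Ideal.mul_mem_left _ _ (Ideal.subset_span ⟨i, rfl⟩)
    have hr' : algebraMap B L π * (r - s) = ∑ i ∈ T, c i * (algebraMap B L (d i) * w i) := by
      rw [mul_sub, ← hc, ← Finset.sum_filter_add_sum_filter_not Finset.univ (fun i => π ∣ d i),
        Finset.mul_sum]
      rw [add_comm, add_sub_assoc, sub_eq_zero.2, add_zero]
      refine Finset.sum_congr rfl fun i hi => ?_
      simp only [Finset.mem_filter, Finset.mem_univ, true_and] at hi
      conv_lhs => rw [h1 i hi, map_mul]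
      ring
    have hrI : algebraMap B L π * (r - s) ∈ I := by
      rw [hr']
      exact Ideal.sum_mem _ fun i hi => Ideal.mul_mem_left _ _ (Ideal.subset_span ⟨i, hi, rfl⟩)
    have hIw : I ≤ Ideal.span (w '' (T : Set ι)) := by
      rw [hI, Ideal.span_le]
      rintro _ ⟨i, hi, rfl⟩
      exact Ideal.mul_mem_left _ _ (Ideal.subset_span ⟨i, hi, rfl⟩)
    have hrw : r - s ∈ Ideal.span (w '' (T : Set ι)) := by
      rcases H1' T π hπ with htop | hn
      · rw [htop]; trivial
      · rcases H1 T with hp | htop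
        · exact (hp.mem_or_mem (hIw hrI)).resolve_left hn
        · rw [htop]; trivial
    have hD : algebraMap B L (∏ i ∈ T, d i) * (r - s) ∈ I := by
      generalize r - s = r' at hrw
      induction hrw using Submodule.span_induction with
      | mem x hx =>
        obtain ⟨i, hi, rfl⟩ := hx
        rw [← Finset.prod_erase_mul T d hi, map_mul, mul_assoc]
        exact Ideal.mul_mem_left _ _ (Ideal.subset_span ⟨i, hi, rfl⟩)
      | zero => simp
      | add x y _ _ hx hy => rw [mul_add]; exact add_mem hx hy
      | smul a x _ hx =>
        rw [smul_eq_mul, mul_left_comm]; exact Ideal.mul_mem_left _ _ hx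
    have hcop : IsCoprime π (∏ i ∈ T, d i) := by
      rw [hπ.irreducible.coprime_iff_not_dvd]
      intro hdvd
      obtain ⟨i, hi, hid⟩ := (hπ.dvd_finsetProd_iff _).1 hdvd
      simp only [hT, Finset.mem_filter, Finset.mem_univ, true_and] at hi
      exact hi hid
    obtain ⟨u, v, huv⟩ := hcop
    have : r - s ∈ I := by
      have e : r - s = algebraMap B L u * (algebraMap B L π * (r - s)) +
          algebraMap B L v * (algebraMap B L (∏ i ∈ T, d i) * (r - s)) := by
        rw [← mul_assoc, ← mul_assoc, ← map_mul, ← map_mul, ← add_mul, ← map_add, huv, map_one,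
          one_mul]
      rw [e]
      exact add_mem (Ideal.mul_mem_left _ _ hrI) (Ideal.mul_mem_left _ _ hD)
    have := add_mem (hIJ this) hs
    simpa using this

theorem abs_height {B L : Type*} [CommRing B] [IsDomain B] [IsPrincipalIdealRing B] [CommRing L]
    [IsNoetherianRing L]
    [Algebra B L] {ι : Type*} [Fintype ι] (w : ι → L)
    (H1 : ∀ T : Set ι, (Ideal.span (w '' T)).IsPrime ∨ Ideal.span (w '' T) = ⊤)
    (H1' : ∀ (T : Set ι) (π : B), Prime π →
      Ideal.span (w '' T) = ⊤ ∨ algebraMap B L π ∉ Ideal.span (w '' T))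
    (H2 : ∀ (T : Set ι) (π : B), Prime π →
      (Ideal.span (insert (algebraMap B L π) (w '' T))).IsPrime ∨
        Ideal.span (insert (algebraMap B L π) (w '' T)) = ⊤) (P : Ideal L) :
    ∀ (D : B) (d : ι → B), ∏ i, d i = D → D ≠ 0 → 
      AssP P (Ideal.span (Set.range fun i => algebraMap B L (d i) * w i)) →
      P.height ≤ Fintype.card ι := by
  classical
  intro D
  induction D using (wellFounded_dvdNotUnit (α := B)).induction with
  | _ D IH =>
  intro d hd hD hP
  by_cases hu : IsUnit D
  · have hsp : Ideal.span (Set.range fun i => algebraMap B L (d i) * w i) =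
        Ideal.span (Set.range w) := by
      apply le_antisymm
      · rw [Ideal.span_le]
        rintro _ ⟨i, rfl⟩
        exact Ideal.mul_mem_left _ _ (Ideal.subset_span ⟨i, rfl⟩)
      · rw [Ideal.span_le]
        rintro _ ⟨i, rfl⟩
        have hi : IsUnit (d i) := isUnit_of_dvd_unit (Finset.dvd_prod_of_mem d (Finset.mem_univ i))
          (hd ▸ hu)
        obtain ⟨e, he⟩ := hi.exists_left_inv
        have e2 : w i = algebraMap B L e * (algebraMap B L (d i) * w i) := by
          rw [← mul_assoc, ← map_mul, he, map_one, one_mul]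
        rw [SetLike.mem_coe, e2]
        exact Ideal.mul_mem_left _ _ (Ideal.subset_span ⟨i, rfl⟩)
    rw [hsp] at hP
    refine height_le_of_prime_span w hP.prime (hP.eq_of_prime ?_)
    simpa using H1 Set.univ
  · obtain ⟨π, hπi, hπD⟩ := WfDvdMonoid.exists_irreducible_factor hu hD
    have hπ : Prime π := hπi.prime
    have hex : ∀ i, ∃ e : B, (π ∣ d i → d i = π * e) ∧ (¬ π ∣ d i → e = d i) := by
      intro i
      by_cases h : π ∣ d i
      · obtain ⟨e, he⟩ := h
        exact ⟨e, fun _ => he, fun h => absurd ⟨e, he⟩ h⟩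
      · exact ⟨d i, fun h' => absurd h' h, fun _ => rfl⟩
    choose d' hd1 hd2 using hex
    obtain ⟨i₀, -, hi₀⟩ := (hπ.dvd_finsetProd_iff _).1 (hd ▸ hπD)
    rcases hP.split (algebraMap B L π) _ (colon_aux w H1 H1' π hπ d d' hd1 hd2) with h | h
    · have hdiv : ∀ i, d' i ∣ d i := fun i => by
        by_cases hi : π ∣ d i
        · exact ⟨π, by rw [mul_comm]; exact hd1 i hi⟩
        · rw [hd2 i hi]
      have hdd : (∏ i, d' i) * π ∣ D := by
        rw [← hd, ← Finset.prod_erase_mul _ d' (Finset.mem_univ i₀),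
          ← Finset.prod_erase_mul _ d (Finset.mem_univ i₀), mul_assoc]
        apply mul_dvd_mul
        · exact Finset.prod_dvd_prod_of_dvd _ _ fun i _ => hdiv i
        · rw [hd1 i₀ hi₀, mul_comm]
      have h0 : ∏ i, d' i ≠ 0 := by
        rintro h0
        rw [h0, zero_mul, zero_dvd_iff] at hdd
        exact hD hdd
      refine IH _ ⟨h0, ?_⟩ d' rfl h0 h
      obtain ⟨c, hc⟩ := hdd
      refine ⟨π * c, fun hu => hπ.not_isUnit (isUnit_of_mul_isUnit_left hu), by rw [hc]; ring⟩
    · let T : Set ι := {i | ¬ π ∣ d i}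
      have hsp : Ideal.span (Set.range fun i => algebraMap B L (d i) * w i) ⊔
          Ideal.span {algebraMap B L π} = Ideal.span (insert (algebraMap B L π) (w '' T)) := by
        have hπm : algebraMap B L π ∈ Ideal.span (insert (algebraMap B L π) (w '' T)) :=
          Ideal.subset_span (Set.mem_insert _ _)
        apply le_antisymm
        · apply sup_le
          · rw [Ideal.span_le]
            rintro _ ⟨i, rfl⟩
            by_cases hi : π ∣ d i
            · simp only [hd1 i hi, map_mul, mul_assoc]
              exact Ideal.mul_mem_right _ _ hπm
            · exact Ideal.mul_mem_left _ _ (Ideal.subset_span (Set.mem_insert_of_mem _ ⟨i, hi, rfl⟩))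
          · rw [Ideal.span_le]; simpa using hπm
        · rw [Ideal.span_le]
          rintro z (rfl | ⟨i, hi, rfl⟩)
          · exact Ideal.mem_sup_right (Ideal.mem_span_singleton_self _)
          · obtain ⟨u, v, huv⟩ := (hπi.coprime_iff_not_dvd).2 hi
            have e : w i = algebraMap B L v * (algebraMap B L (d i) * w i) +
                (algebraMap B L u * w i) * algebraMap B L π := by
              have : (algebraMap B L u * algebraMap B L π +
                algebraMap B L v * algebraMap B L (d i)) = 1 := by
                rw [← map_mul, ← map_mul, ← map_add, huv, map_one]
              linear_combination (-w i) * this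
            rw [SetLike.mem_coe, e]
            refine add_mem (Ideal.mem_sup_left (Ideal.mul_mem_left _ _ (Ideal.subset_span ⟨i, rfl⟩)))
              (Ideal.mem_sup_right (Ideal.mul_mem_left _ _ (Ideal.mem_span_singleton_self _)))
      rw [hsp] at h
      let v : ι → L := fun i => if i = i₀ then algebraMap B L π else if i ∈ T then w i else 0
      refine height_le_of_prime_span v h.prime ((h.eq_of_prime (H2 T π hπ)).trans ?_)
      apply le_antisymm
      · rw [Ideal.span_le]
        rintro z (rfl | ⟨i, hi, rfl⟩)
        · exact Ideal.subset_span ⟨i₀, by simp [v]⟩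
        · have : i ≠ i₀ := by rintro rfl; exact hi hi₀
          exact Ideal.subset_span ⟨i, by simp [v, this, hi]⟩
      · rw [Ideal.span_le]
        rintro _ ⟨i, rfl⟩
        simp only [v]
        split_ifs with h1 h2
        · exact Ideal.subset_span (Set.mem_insert _ _)
        · exact Ideal.subset_span (Set.mem_insert_of_mem _ ⟨i, h2, rfl⟩)
        · simp

noncomputable def linF (σ R : Type*) [CommRing R] : (σ →₀ R) →ₗ[R] MvPolynomial σ R :=
  Finsupp.linearCombination R MvPolynomial.X

theorem linF_single {σ R : Type*} [CommRing R] (i : σ) (r : R) :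
    linF σ R (Finsupp.single i r) = r • MvPolynomial.X i := by
  simp [linF]

theorem exists_coord {σ τ R : Type*} [CommRing R] (b : Module.Basis τ R (σ →₀ R)) :
    ∃ φ : MvPolynomial τ R ≃ₐ[R] MvPolynomial σ R,
      ∀ i, φ (MvPolynomial.X i) = linF σ R (b i) := by
  let b0 : Module.Basis σ R (σ →₀ R) := Finsupp.basisSingleOne
  refine ⟨(SymmetricAlgebra.equivMvPolynomial b).symm.trans (SymmetricAlgebra.equivMvPolynomial b0),
    fun i => ?_⟩
  rw [AlgEquiv.trans_apply, SymmetricAlgebra.equivMvPolynomial_symm_X]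
  have : ((SymmetricAlgebra.equivMvPolynomial b0).toLinearMap ∘ₗ SymmetricAlgebra.ι R (σ →₀ R))
      = linF σ R := by
    refine b0.ext fun j => ?_
    rw [LinearMap.comp_apply, AlgEquiv.toLinearMap_apply,
      SymmetricAlgebra.equivMvPolynomial_ι_apply]
    simp [b0, linF]
  exact LinearMap.congr_fun this (b i)

theorem prime_vars {σ B : Type*} [CommRing B] (I : Ideal B) [hI : I.IsPrime]
    (T : Set σ) :
    (I.map (MvPolynomial.C : B →+* MvPolynomial σ B) ⊔
      Ideal.span (MvPolynomial.X '' T)).IsPrime := by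
  classical
  set Q := I.map (MvPolynomial.C : B →+* MvPolynomial σ B) ⊔ Ideal.span (MvPolynomial.X '' T) with hQ
  let s : MvPolynomial σ B →ₐ[B] MvPolynomial σ B :=
    MvPolynomial.aeval fun i => if i ∈ T then 0 else MvPolynomial.X i
  have hs : ∀ p, p - s p ∈ Q := by
    intro p
    induction p using MvPolynomial.induction_on with
    | C a => simp [s]
    | add p q hp hq =>
      rw [map_add, add_sub_add_comm]; exact add_mem hp hq
    | mul_X p i hp =>
      have e : p * MvPolynomial.X i - s (p * MvPolynomial.X i) =
        (p - s p) * MvPolynomial.X i + s p * (MvPolynomial.X i - s (MvPolynomial.X i)) := by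
          rw [map_mul]; ring
      rw [e]
      refine add_mem (Ideal.mul_mem_right _ _ hp) (Ideal.mul_mem_left _ _ ?_)
      by_cases hi : i ∈ T
      · have hX : (MvPolynomial.X i : MvPolynomial σ B) ∈ Q :=
          Ideal.mem_sup_right (Ideal.subset_span ⟨i, hi, rfl⟩)
        simpa [s, hi] using hX
      · simp [s, hi]
  let g : MvPolynomial σ B →+* MvPolynomial σ (B ⧸ I) :=
    (MvPolynomial.map (Ideal.Quotient.mk I)).comp s.toRingHom
  have hk : Q = RingHom.ker g := by
    apply le_antisymm
    · refine sup_le ?_ ?_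
      · rw [Ideal.map_le_iff_le_comap]
        intro a ha
        simp [g, s, RingHom.mem_ker, Ideal.Quotient.eq_zero_iff_mem.2 ha]
      · rw [Ideal.span_le]
        rintro _ ⟨i, hi, rfl⟩
        simp [g, s, RingHom.mem_ker, hi]
    · intro p hp
      have h1 : s p ∈ RingHom.ker (MvPolynomial.map (σ := σ) (Ideal.Quotient.mk I)) := hp
      rw [MvPolynomial.ker_map, Ideal.mk_ker] at h1
      have := add_mem (hs p) (Ideal.mem_sup_left h1 : s p ∈ Q)
      simpa using this
  rw [hk]
  exact RingHom.ker_isPrime g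

theorem C_mem_vars {σ B : Type*} [CommRing B] (I : Ideal B)
    (T : Set σ) (a : B) (ha : MvPolynomial.C a ∈ (I.map (MvPolynomial.C : B →+* MvPolynomial σ B) ⊔
      Ideal.span (MvPolynomial.X '' T))) : a ∈ I := by
  have : (I.map (MvPolynomial.C : B →+* MvPolynomial σ B) ⊔
      Ideal.span (MvPolynomial.X '' T)) ≤ I.comap (MvPolynomial.aeval (fun _ => (0 : B))) := by
    refine sup_le ?_ ?_
    · rw [Ideal.map_le_iff_le_comap]
      intro a ha
      simpa using ha
    · rw [Ideal.span_le]
      rintro _ ⟨i, hi, rfl⟩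
      simp
  simpa using this ha

theorem map_prime_or_top {A L : Type*} [CommRing A] [CommRing L] [Algebra A L] (M : Submonoid A)
    [IsLocalization M L] (Q : Ideal A) (hQ : Q.IsPrime) :
    ((Q.map (algebraMap A L)).IsPrime ∧ (∀ a, algebraMap A L a ∈ Q.map (algebraMap A L) → a ∈ Q)) ∨
      Q.map (algebraMap A L) = ⊤ := by
  by_cases h : Disjoint (M : Set A) (Q : Set A)
  · left
    refine ⟨IsLocalization.isPrime_of_isPrime_disjoint M L Q hQ h, fun a ha => ?_⟩
    have := IsLocalization.under_map_of_isPrime_disjoint M L hQ h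
    rw [← this]; exact ha
  · right
    obtain ⟨a, ha, ha'⟩ := Set.not_disjoint_iff.1 h
    exact Ideal.eq_top_of_isUnit_mem _ (Ideal.mem_map_of_mem _ ha') (IsLocalization.map_units L ⟨a, ha⟩)

theorem linear_height {B : Type*} [CommRing B] [IsDomain B] [IsPrincipalIdealRing B]
    {σ : Type*} [Finite σ] {L : Type*} [CommRing L] [Algebra (MvPolynomial σ B) L]
    (M : Submonoid (MvPolynomial σ B)) [IsLocalization M L] {t : ℕ} (l : Fin t → (σ →₀ B))
    (P : Ideal L)
    (hP : AssP P (Ideal.span (Set.range fun i => algebraMap (MvPolynomial σ B) L (linF σ B (l i))))) :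
    P.height ≤ t := by
  classical
  have hL : IsNoetherianRing L := IsLocalization.isNoetherianRing M L inferInstance
  obtain ⟨n, snf⟩ := Submodule.smithNormalForm (Finsupp.basisSingleOne (R := B) (ι := σ))
    (Submodule.span B (Set.range l))
  obtain ⟨bM, bN, f, a, hsnf⟩ := snf
  have hn : n ≤ t := by
    have h1 : Module.finrank B (Submodule.span B (Set.range l)) = n := by
      simpa using Module.finrank_eq_card_basis bN
    have h2 := finrank_range_le_card (R := B) l
    rw [Set.finrank, h1] at h2
    simpa using h2
  have ha : ∀ i, a i ≠ 0 := by
    intro i h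
    have := hsnf i
    rw [h, zero_smul] at this
    exact bN.ne_zero i (by exact_mod_cast this)
  obtain ⟨φ, hφ⟩ := exists_coord bM
  let _ : Algebra B L := ((algebraMap (MvPolynomial σ B) L).comp MvPolynomial.C).toAlgebra
  have hBL : ∀ r : B, algebraMap B L r = algebraMap (MvPolynomial σ B) L (φ (MvPolynomial.C r)) := by
    intro r
    have : φ (MvPolynomial.C r) = MvPolynomial.C r := φ.commutes r
    rw [this]; rfl
  let w : Fin n → L := fun i => algebraMap (MvPolynomial σ B) L (φ (MvPolynomial.X (f i)))
  let Q : Ideal B → Set (Fin n) → Ideal (MvPolynomial σ B) := fun I T =>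
    (I.map (MvPolynomial.C : B →+* MvPolynomial σ B) ⊔ Ideal.span (MvPolynomial.X '' (f '' T))).map φ
  have hQp : ∀ I T, I.IsPrime → (Q I T).IsPrime := by
    intro I T hI
    have := prime_vars (σ := σ) I (hI := hI) (f '' T)
    exact Ideal.map_isPrime_of_equiv φ
  have hQm : ∀ I T, (Q I T).map (algebraMap (MvPolynomial σ B) L) =
      I.map (algebraMap B L) ⊔ Ideal.span (w '' T) := by
    intro I T
    rw [← Ideal.span_eq I]
    simp only [Q, Ideal.map_sup, Ideal.map_span, Set.image_image, w, hBL]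
  have hQ0 : ∀ T, (Q ⊥ T).map (algebraMap (MvPolynomial σ B) L) = Ideal.span (w '' T) := by
    intro T
    rw [hQm]; simp
  have hQπ : ∀ T (π : B), (Q (Ideal.span {π}) T).map (algebraMap (MvPolynomial σ B) L) =
      Ideal.span (insert (algebraMap B L π) (w '' T)) := by
    intro T π
    rw [hQm, Ideal.map_span, Set.image_singleton, Ideal.span_insert]
  have hJ : Ideal.span (Set.range fun i => algebraMap (MvPolynomial σ B) L (linF σ B (l i))) =
      Ideal.span (Set.range fun i => algebraMap B L (a i) * w i) := by
    have hw : ∀ i, algebraMap B L (a i) * w i =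
        algebraMap (MvPolynomial σ B) L (linF σ B (bN i)) := by
      intro i
      rw [hsnf, map_smul, hBL, ← map_mul, ← hφ, MvPolynomial.smul_eq_C_mul]
      congr 2
      exact φ.commutes _
    have hmem : ∀ (J : Ideal L) (N : Submodule B (σ →₀ B)) (s : Set (σ →₀ B)),
        N = Submodule.span B s →
        (∀ v ∈ s, algebraMap (MvPolynomial σ B) L (linF σ B v) ∈ J) → 
        (∀ v ∈ N, algebraMap (MvPolynomial σ B) L (linF σ B v) ∈ J) := by
      rintro J N s rfl hs v hv
      induction hv using Submodule.span_induction with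
      | mem x hx => exact hs x hx
      | zero => simp
      | add x y _ _ hx hy => rw [map_add, map_add]; exact add_mem hx hy
      | smul a x _ hx =>
        rw [map_smul, MvPolynomial.smul_eq_C_mul, map_mul]; exact Ideal.mul_mem_left _ _ hx
    have hN : Submodule.span B (Set.range l) =
        Submodule.span B (Set.range fun i => (bN i : σ →₀ B)) := by
      have := congrArg (Submodule.map (Submodule.subtype _)) bN.span_eq
      rw [Submodule.map_span, Submodule.map_top, Submodule.range_subtype, ← Set.range_comp] at this
      exact this.symm
    apply le_antisymm
    · rw [Ideal.span_le]
      rintro _ ⟨i, rfl⟩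
      refine hmem _ _ _ hN ?_ _ (Submodule.subset_span ⟨i, rfl⟩)
      rintro _ ⟨i, rfl⟩
      rw [← hw]
      exact Ideal.subset_span ⟨i, rfl⟩
    · rw [Ideal.span_le]
      rintro _ ⟨i, rfl⟩
      simp only [hw]
      refine hmem _ _ _ rfl ?_ _ (bN i).2
      rintro _ ⟨i, rfl⟩
      exact Ideal.subset_span ⟨i, rfl⟩
  rw [hJ] at hP
  have hfin := abs_height w ?_ ?_ ?_ P _ a rfl (Finset.prod_ne_zero_iff.2 fun i _ => ha i) hP
  · refine hfin.trans ?_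
    simpa using hn
  · intro T
    rw [← hQ0]
    exact (map_prime_or_top M _ (hQp ⊥ T Ideal.isPrime_bot)).imp_left And.left
  · intro T π hπ
    rw [← hQ0]
    rcases map_prime_or_top (L := L) M _ (hQp ⊥ T Ideal.isPrime_bot) with h | h
    · right
      intro hmem
      rw [hBL] at hmem
      have h2 := h.2 _ hmem
      have h3 := (Ideal.mem_map_of_equiv φ _).1 h2
      obtain ⟨x, hx, hxe⟩ := h3
      rw [φ.injective hxe] at hx
      exact hπ.ne_zero (C_mem_vars _ _ _ hx)
    · exact Or.inl h
  · intro T π hπ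
    rw [← hQπ]
    have := (Ideal.span_singleton_prime hπ.ne_zero).2 hπ
    exact (map_prime_or_top M _ (hQp _ T this)).imp_left And.left

theorem AssP.localize {S L : Type*} [CommRing S] [CommRing L] [Algebra S L] (M : Submonoid S)
    [IsLocalization M L] {P J : Ideal S} (h : AssP P J) (hd : ∀ s ∈ M, s ∉ P) :
    AssP (P.map (algebraMap S L)) (J.map (algebraMap S L)) := by
  obtain ⟨hP, f, hf⟩ := h
  have hdis : Disjoint (M : Set S) (P : Set S) := Set.disjoint_left.2 fun s hs hs' => hd s hs hs'
  refine ⟨IsLocalization.isPrime_of_isPrime_disjoint M L P hP hdis, algebraMap S L f, fun r => ?_⟩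
  constructor
  · intro hr
    induction hr using Submodule.span_induction with
    | mem x hx =>
      obtain ⟨s, hs, rfl⟩ := hx
      rw [← map_mul]
      exact Ideal.mem_map_of_mem _ ((hf s).1 hs)
    | zero => simp
    | add x y _ _ hx hy => rw [add_mul]; exact add_mem hx hy
    | smul a x _ hx => rw [smul_eq_mul, mul_assoc]; exact Ideal.mul_mem_left _ _ hx
  · intro hr
    obtain ⟨s, m, rfl⟩ := IsLocalization.exists_mk'_eq M r
    obtain ⟨⟨⟨j, hj⟩, m'⟩, hjm⟩ := (IsLocalization.mem_map_algebraMap_iff M L).1 hr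
    rw [IsLocalization.mk'_mem_iff]
    have h1 : algebraMap S L (s * f * m') = algebraMap S L (j * m) := by
      rw [map_mul, map_mul, map_mul, ← hjm, ← IsLocalization.mk'_spec L s m]
      ring
    obtain ⟨c, hc⟩ := (IsLocalization.eq_iff_exists M L).1 h1
    have h2 : (s * (c * m')) * f ∈ J := by
      have : (s * (c * m')) * f = (c * m) * j := by linear_combination hc
      rw [this]; exact J.mul_mem_left _ hj
    have h3 := (hP.mem_or_mem ((hf _).2 h2)).resolve_right (hd _ (c * m').2)
    exact Ideal.mem_map_of_mem _ h3

theorem adapted_basis {k V ι : Type*} [Field k] [AddCommGroup V] [Module k V]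
    [Module.Finite k V] (W : Submodule k V) (bW : Module.Basis ι k W) :
    ∃ (n : ℕ) (b : Module.Basis (ι ⊕ Fin n) k V), ∀ i, b (Sum.inl i) = bW i := by
  obtain ⟨W', hW⟩ := Submodule.exists_isCompl W
  refine ⟨_, (bW.prod (Module.finBasis k W')).map (Submodule.prodEquivOfIsCompl W W' hW),
    fun i => ?_⟩
  simp

open MvPolynomial in
theorem chart_exists {k σ : Type*} [Field k] [Finite σ] (G H : σ →₀ k)
    (hli : LinearIndependent k ![G, H]) :
    ∃ (κ : Type) (_ : Finite κ) (Ψ : MvPolynomial σ k →+* MvPolynomial (Option κ) (Polynomial k)),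
      Function.Injective Ψ ∧ Ψ (linF σ k G) = X none ∧
      Ψ (linF σ k H) = C Polynomial.X * X none ∧
      (∀ v, ∃ l, Ψ (linF σ k v) = linF (Option κ) (Polynomial k) l) ∧
      (∀ a : MvPolynomial (Option κ) (Polynomial k), ∃ (n : ℕ) (s : MvPolynomial σ k),
        X none ^ n * a = Ψ s) := by
  classical
  obtain ⟨n, b, hb'⟩ := adapted_basis _ (Module.Basis.span hli)
  let κ := Fin n
  have hκ : Finite κ := inferInstanceAs (Finite (Fin n))
  obtain ⟨φ, hφ⟩ := exists_coord b
  have hb : ∀ i, b (Sum.inl i) = ![G, H] i := fun i => by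
    rw [hb', Module.Basis.span_apply]
  let ψ : MvPolynomial (Fin 2 ⊕ κ) k →ₐ[k] MvPolynomial (Option κ) (Polynomial k) :=
    aeval (Sum.elim ![X none, C Polynomial.X * X none] (fun j => X (some j)))
  have hψ0 : ψ (X (Sum.inl 0)) = X none := by simp [ψ]
  have hψ1 : ψ (X (Sum.inl 1)) = C Polynomial.X * X none := by simp [ψ]
  have hψ2 : ∀ j, ψ (X (Sum.inr j)) = X (some j) := fun j => by simp [ψ]
  have hψC : ∀ r, ψ (C r) = C (Polynomial.C r) := fun r => by
    simp [ψ, MvPolynomial.algebraMap_apply]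
  have hG : φ (X (Sum.inl 0)) = linF σ k G := by rw [hφ, hb]; rfl
  have hH : φ (X (Sum.inl 1)) = linF σ k H := by rw [hφ, hb]; rfl
  refine ⟨κ, hκ, ψ.toRingHom.comp φ.symm.toRingEquiv.toRingHom, ?_, ?_, ?_, ?_, ?_⟩
  · have hinj : Function.Injective ψ := by
      let F := FractionRing (MvPolynomial (Fin 2 ⊕ κ) k)
      let i : MvPolynomial (Fin 2 ⊕ κ) k →+* F := algebraMap _ _
      let θ : MvPolynomial (Option κ) (Polynomial k) →+* F :=
        eval₂Hom (Polynomial.eval₂RingHom (i.comp C) (i (X (Sum.inl 1)) / i (X (Sum.inl 0))))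
          (fun o => o.elim (i (X (Sum.inl 0))) (fun j => i (X (Sum.inr j))))
      have hi : Function.Injective i := IsFractionRing.injective _ _
      have hne : i (X (Sum.inl 0)) ≠ 0 := by
        rw [Ne, map_eq_zero_iff i hi]; exact X_ne_zero _
      have hθ : θ.comp (ψ : _ →+* _) = i := by
        apply MvPolynomial.ringHom_ext
        · intro r
          simp only [RingHom.comp_apply, RingHom.coe_coe, hψC]
          simp [θ]
        · rintro (j | j)
          · fin_cases j
            · simp only [RingHom.comp_apply, RingHom.coe_coe, Fin.zero_eta, hψ0]
              simp [θ]
            · simp only [RingHom.comp_apply, RingHom.coe_coe, Fin.mk_one, hψ1]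
              simp only [θ, map_mul, eval₂Hom_C, eval₂Hom_X']
              simpa using div_mul_cancel₀ _ hne
          · simp only [RingHom.comp_apply, RingHom.coe_coe, hψ2]
            simp [θ]
      have : Function.Injective (θ ∘ ψ) := by
        have e : θ ∘ ψ = i := by rw [← hθ]; rfl
        rw [e]; exact hi
      exact this.of_comp
    exact hinj.comp φ.symm.injective
  · rw [← hG]; simp [hψ0]
  · rw [← hH]; simp [hψ1]
  · intro v
    have hv := b.mem_span v
    induction hv using Submodule.span_induction with
    | mem x hx =>
      obtain ⟨j, rfl⟩ := hx
      rw [← hφ]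
      rcases j with j | j
      · fin_cases j
        · exact ⟨Finsupp.single none 1, by simp [hψ0, linF_single]⟩
        · exact ⟨Finsupp.single none Polynomial.X, by
            simp [hψ1, linF_single, MvPolynomial.smul_eq_C_mul]⟩
      · exact ⟨Finsupp.single (some j) 1, by simp [hψ2, linF_single]⟩
    | zero => exact ⟨0, by simp⟩
    | add x y _ _ hx hy =>
      obtain ⟨l, hl⟩ := hx
      obtain ⟨l', hl'⟩ := hy
      exact ⟨l + l', by rw [map_add, map_add, map_add, hl, hl']⟩
    | smul a x _ hx =>
      obtain ⟨l, hl⟩ := hx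
      refine ⟨Polynomial.C a • l, ?_⟩
      rw [map_smul (linF σ k), map_smul (linF _ _), ← hl, MvPolynomial.smul_eq_C_mul,
        MvPolynomial.smul_eq_C_mul, map_mul]
      congr 1
      have : φ.symm (C a) = C a := φ.symm.commutes a
      simp [this, hψC]
  · suffices h : ∀ a : MvPolynomial (Option κ) (Polynomial k), ∃ (n : ℕ) (s : MvPolynomial (Fin 2 ⊕ κ) k), X none ^ n * a = ψ s by
      intro a
      obtain ⟨n, s, hs⟩ := h a
      exact ⟨n, φ s, by simp [hs]⟩
    have hadd : ∀ p q : MvPolynomial (Option κ) (Polynomial k), (∃ (n : ℕ) (s : MvPolynomial (Fin 2 ⊕ κ) k), X none ^ n * p = ψ s) →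
        (∃ (n : ℕ) (s : MvPolynomial (Fin 2 ⊕ κ) k), X none ^ n * q = ψ s) → (∃ (n : ℕ) (s : MvPolynomial (Fin 2 ⊕ κ) k), X none ^ n * (p + q) = ψ s) := by
      rintro p q ⟨n, s, hs⟩ ⟨n', s', hs'⟩
      refine ⟨n + n', X (Sum.inl 0) ^ n' * s + X (Sum.inl 0) ^ n * s', ?_⟩
      simp only [map_add, map_mul, map_pow, hψ0, ← hs, ← hs']
      ring
    intro a
    induction a using MvPolynomial.induction_on with
    | C p =>
      induction p using Polynomial.induction_on' with
      | add p q hp hq => rw [C_add]; exact hadd _ _ hp hq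
      | monomial n r =>
        refine ⟨n, C r * X (Sum.inl 1) ^ n, ?_⟩
        rw [map_mul, map_pow, hψ1, hψC, ← Polynomial.C_mul_X_pow_eq_monomial, C_mul, C_pow]
        ring
    | add p q hp hq => exact hadd _ _ hp hq
    | mul_X p i hp =>
      obtain ⟨n, s, hs⟩ := hp
      rcases i with _ | j
      · exact ⟨n, s * X (Sum.inl 0), by rw [map_mul, hψ0, ← hs]; ring⟩
      · exact ⟨n, s * X (Sum.inr j), by rw [map_mul, hψ2, ← hs]; ring⟩

open MvPolynomial in
theorem main_chart {k σ : Type*} [Field k] [Finite σ] (G H : σ →₀ k)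
    (hli : LinearIndependent k ![G, H]) {t : ℕ} (c e : Fin t → (σ →₀ k))
    (P : Ideal (MvPolynomial σ k))
    (hP : AssP P (Ideal.span (Set.range fun i =>
      linF σ k (c i) * linF σ k G - linF σ k (e i) * linF σ k H)))
    (hG : linF σ k G ∉ P) : P.height ≤ t := by
  obtain ⟨κ, hκ, Ψ, hinj, hΨG, hΨH, hlin, hsurj⟩ := chart_exists G H hli
  let A := MvPolynomial (Option κ) (Polynomial k)
  let L := Localization.Away (X none : A)
  choose l hl using hlin
  let _ : Algebra (MvPolynomial σ k) L := ((algebraMap A L).comp Ψ).toAlgebra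
  have halg : ∀ s, algebraMap (MvPolynomial σ k) L s = algebraMap A L (Ψ s) := fun s => rfl
  have hAL : Function.Injective (algebraMap A L) :=
    IsLocalization.injective L (powers_le_nonZeroDivisors_of_noZeroDivisors (X_ne_zero none))
  have hunit : IsUnit (algebraMap A L (X none)) := IsLocalization.Away.algebraMap_isUnit _
  have hloc : IsLocalization (Submonoid.powers (linF σ k G)) L := by
    constructor
    constructor
    · rintro ⟨_, n, rfl⟩
      simp only [halg, map_pow, hΨG]
      exact hunit.pow n
    · intro z
      obtain ⟨a, m, rfl⟩ := IsLocalization.exists_mk'_eq (Submonoid.powers (X none : A)) z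
      obtain ⟨_, m, rfl⟩ := m
      obtain ⟨n, s, hs⟩ := hsurj a
      refine ⟨⟨s, ⟨_, n + m, rfl⟩⟩, ?_⟩
      simp only [halg, ← hs, map_pow, hΨG, map_mul, pow_add]
      have := IsLocalization.mk'_spec L a (⟨_, m, rfl⟩ : Submonoid.powers (X none : A))
      simp only [map_pow] at this
      rw [← this]
      ring
    · intro x y hxy
      exact ⟨1, by rw [hinj (hAL hxy)]⟩
  have hd : ∀ s ∈ Submonoid.powers (linF σ k G), s ∉ P := by
    rintro _ ⟨n, rfl⟩ h
    exact hG (hP.prime.mem_of_pow_mem n h)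
  have hPL := hP.localize (L := L) _ hd
  have := hP.prime
  rw [← IsLocalization.height_map_of_disjoint (S := L) (Submonoid.powers (linF σ k G)) P
    (Set.disjoint_left.2 fun s hs hs' => hd s hs hs')]
  refine linear_height (L := L) (Submonoid.powers (X none : A))
    (fun i => l (c i) - (Polynomial.X : Polynomial k) • l (e i)) _ ?_
  convert hPL using 1
  have key : ∀ i, algebraMap (MvPolynomial σ k) L
      (linF σ k (c i) * linF σ k G - linF σ k (e i) * linF σ k H) = algebraMap A L (X none) *
      algebraMap A L (linF _ _ (l (c i) - (Polynomial.X : Polynomial k) • l (e i))) := by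
    intro i
    rw [halg, ← map_mul (algebraMap A L)]
    congr 1
    rw [map_sub, map_mul Ψ, map_mul Ψ, hl (c i), hl (e i), hΨG, hΨH, map_sub, map_smul, smul_eq_C_mul]
    ring
  rw [Ideal.map_span, ← Set.range_comp]
  apply le_antisymm
  · rw [Ideal.span_le]
    rintro _ ⟨i, rfl⟩
    obtain ⟨v, hv⟩ := hunit.exists_left_inv
    have h1 : algebraMap A L (linF _ _ (l (c i) - (Polynomial.X : Polynomial k) • l (e i))) =
      v * algebraMap (MvPolynomial σ k) L
      (linF σ k (c i) * linF σ k G - linF σ k (e i) * linF σ k H) := by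
      rw [key, ← mul_assoc, hv, one_mul]
    simp only [SetLike.mem_coe]
    rw [h1]
    exact Ideal.mul_mem_left _ _ (Ideal.subset_span ⟨i, rfl⟩)
  · rw [Ideal.span_le]
    rintro _ ⟨i, rfl⟩
    simp only [SetLike.mem_coe, Function.comp_apply]
    rw [key]
    exact Ideal.mul_mem_left _ _ (Ideal.subset_span ⟨i, rfl⟩)

theorem exists_fin_basis {k V : Type*} [Field k] [AddCommGroup V] [Module k V]
    [Module.Finite k V] (W : Submodule k V) : ∃ r : ℕ, Nonempty (Module.Basis (Fin r) k W) :=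
  ⟨_, ⟨Module.finBasis k W⟩⟩

open MvPolynomial in
theorem exists_reduced {σ R : Type*} [CommRing R] (I : Ideal R) (p : MvPolynomial σ R) :
    ∃ p1 : MvPolynomial σ R, p - p1 ∈ I.map (C : R →+* MvPolynomial σ R) ∧
      ∀ n, p1.coeff n ≠ 0 → p1.coeff n ∉ I := by
  classical
  let p1 : MvPolynomial σ R := ∑ n ∈ p.support.filter (fun n => p.coeff n ∉ I), monomial n (p.coeff n)
  have hc : ∀ n, p1.coeff n = if p.coeff n ∈ I then 0 else p.coeff n := by
    intro n
    simp only [p1, coeff_sum, coeff_monomial, Finset.sum_ite_eq', Finset.mem_filter, mem_support_iff]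
    by_cases h : p.coeff n ∈ I
    · simp [h]
    · simp only [h, not_false_eq_true, and_true, if_false]
      by_cases h0 : p.coeff n = 0
      · simp [h0]
      · simp [h0]
  refine ⟨p1, ?_, fun n hn => ?_⟩
  · rw [mem_map_C_iff]
    intro n
    rw [coeff_sub, hc]
    split_ifs with h
    · simpa using h
    · simp
  · rw [hc] at hn ⊢
    split_ifs at hn ⊢ with h
    · exact absurd rfl hn
    · exact h

open MvPolynomial in
theorem core_top {n : ℕ} {R : Type*} [CommRing R] (Q J : Ideal R) (hQ : Q.IsMaximal)
    (f g : MvPolynomial (Fin n) R) (hf : f ∉ J.map (C : R →+* MvPolynomial (Fin n) R))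
    (hQf : ∀ c ∈ Q, C c * f ∈ J.map (C : R →+* MvPolynomial (Fin n) R))
    (hgf : g * f ∈ J.map (C : R →+* MvPolynomial (Fin n) R)) :
    g ∈ Q.map (C : R →+* MvPolynomial (Fin n) R) := by
  by_contra hg
  obtain ⟨f1, hf1, hf1'⟩ := exists_reduced J f
  obtain ⟨g1, hg1, hg1'⟩ := exists_reduced Q g
  have hf0 : f1 ≠ 0 := by rintro rfl; exact hf (by simpa using hf1)
  have hg0 : g1 ≠ 0 := by rintro rfl; exact hg (by simpa using hg1)
  let o : MonomialOrder (Fin n) := MonomialOrder.lex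
  have hd : o.leadingCoeff f1 ∉ J := hf1' _ (o.leadingCoeff_ne_zero_iff.2 hf0)
  have hc : o.leadingCoeff g1 ∉ Q := hg1' _ (o.leadingCoeff_ne_zero_iff.2 hg0)
  have hQf' : ∀ z ∈ Q.map (C : R →+* MvPolynomial (Fin n) R),
      z * f ∈ J.map (C : R →+* MvPolynomial (Fin n) R) := by
    intro z hz
    induction hz using Submodule.span_induction with
    | mem x hx =>
      obtain ⟨s, hs, rfl⟩ := hx
      exact hQf s hs
    | zero => simp
    | add x y _ _ hx hy => rw [add_mul]; exact add_mem hx hy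
    | smul a x _ hx => rw [smul_eq_mul, mul_assoc]; exact Ideal.mul_mem_left _ _ hx
  have hprod : g1 * f1 ∈ J.map (C : R →+* MvPolynomial (Fin n) R) := by
    have e : g1 * f1 = g * f - (g - g1) * f - g1 * (f - f1) := by ring
    rw [e]
    exact sub_mem (sub_mem hgf (hQf' _ hg1)) (Ideal.mul_mem_left _ _ hf1)
  have hcd : o.leadingCoeff g1 * o.leadingCoeff f1 ∈ J := by
    rw [← o.coeff_mul_of_degree_add]
    exact mem_map_C_iff.1 hprod _
  have hQd : ∀ c ∈ Q, c * o.leadingCoeff f1 ∈ J := by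
    intro c hcQ
    have : C c * f1 ∈ J.map (C : R →+* MvPolynomial (Fin n) R) := by
      have e : C c * f1 = C c * f - C c * (f - f1) := by ring
      rw [e]
      exact sub_mem (hQf c hcQ) (Ideal.mul_mem_left _ _ hf1)
    have := mem_map_C_iff.1 this (o.degree f1)
    rwa [coeff_C_mul] at this
  obtain ⟨r, i, hi, hri⟩ := hQ.exists_inv hc
  apply hd
  have e : o.leadingCoeff f1 = r * (o.leadingCoeff g1 * o.leadingCoeff f1) +
      i * o.leadingCoeff f1 := by linear_combination (-o.leadingCoeff f1) * hri
  rw [e]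
  exact add_mem (Ideal.mul_mem_left _ _ hcd) (hQd i hi)

open MvPolynomial in
theorem top_case {k σ : Type*} [Field k] [Finite σ] (W : Submodule k (σ →₀ k))
    {t : ℕ} (q : Fin t → MvPolynomial σ k)
    (hq : ∀ i, q i ∈ Algebra.adjoin k (linF σ k '' W))
    (f g : MvPolynomial σ k) (hf : f ∉ Ideal.span (Set.range q))
    (hWf : ∀ v ∈ W, linF σ k v * f ∈ Ideal.span (Set.range q))
    (hgf : g * f ∈ Ideal.span (Set.range q)) :
    g ∈ Ideal.span (linF σ k '' W) := by
  obtain ⟨r, ⟨bW⟩⟩ := exists_fin_basis W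
  obtain ⟨n, b, hb⟩ := adapted_basis W bW
  obtain ⟨φ, hφ⟩ := exists_coord (b.reindex (Equiv.sumComm _ _))
  let e : MvPolynomial σ k ≃ₐ[k] MvPolynomial (Fin n) (MvPolynomial (Fin r) k) :=
    φ.symm.trans (sumAlgEquiv k (Fin n) (Fin r))
  have heX : ∀ j, e (linF σ k (bW j : σ →₀ k)) = C (X j) := by
    intro j
    have : linF σ k (bW j : σ →₀ k) = φ (X (Sum.inr j)) := by
      rw [hφ, ← hb]; simp
    rw [this]
    simp [e]
  have hW : W = Submodule.span k (Set.range fun i => (bW i : σ →₀ k)) := by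
    have := congrArg (Submodule.map (Submodule.subtype _)) bW.span_eq
    rw [Submodule.map_span, Submodule.map_top, Submodule.range_subtype, ← Set.range_comp] at this
    exact this.symm
  have heW : ∀ v ∈ W, ∃ z, e (linF σ k v) = C z := by
    intro v hv
    rw [hW] at hv
    induction hv using Submodule.span_induction with
    | mem x hx =>
      obtain ⟨j, rfl⟩ := hx
      exact ⟨X j, heX j⟩
    | zero => exact ⟨0, by simp⟩
    | add x y _ _ hx hy =>
      obtain ⟨z, hz⟩ := hx
      obtain ⟨z', hz'⟩ := hy
      exact ⟨z + z', by rw [map_add, map_add, hz, hz', C_add]⟩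
    | smul a x _ hx =>
      obtain ⟨z, hz⟩ := hx
      refine ⟨a • z, ?_⟩
      rw [map_smul, map_smul, hz]
      ext
      simp [coeff_C]
  have heA : ∀ p ∈ Algebra.adjoin k (linF σ k '' W), ∃ z, e p = C z := by
    intro p hp
    induction hp using Algebra.adjoin_induction with
    | mem x hx => obtain ⟨v, hv, rfl⟩ := hx; exact heW v hv
    | algebraMap r => exact ⟨algebraMap _ _ r, by rw [AlgEquiv.commutes]; rfl⟩
    | add x y _ _ hx hy =>
      obtain ⟨z, hz⟩ := hx
      obtain ⟨z', hz'⟩ := hy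
      exact ⟨z + z', by rw [map_add, hz, hz', C_add]⟩
    | mul x y _ _ hx hy =>
      obtain ⟨z, hz⟩ := hx
      obtain ⟨z', hz'⟩ := hy
      exact ⟨z * z', by rw [map_mul, hz, hz', C_mul]⟩
  choose q0 hq0 using fun i => heA _ (hq i)
  let J0 : Ideal (MvPolynomial (Fin r) k) := Ideal.span (Set.range q0)
  have hJ : ∀ p, e p ∈ J0.map (C : _ →+* MvPolynomial (Fin n) (MvPolynomial (Fin r) k)) ↔
      p ∈ Ideal.span (Set.range q) := by
    intro p
    have : J0.map (C : _ →+* MvPolynomial (Fin n) (MvPolynomial (Fin r) k)) =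
        (Ideal.span (Set.range q)).map e := by
      rw [Ideal.map_span, Ideal.map_span, ← Set.range_comp, ← Set.range_comp]
      congr 2
      ext1 i
      exact (hq0 i).symm
    rw [this]
    constructor
    · intro h
      obtain ⟨x, hx, hxe⟩ := (Ideal.mem_map_of_equiv e _).1 h
      rwa [← e.injective hxe]
    · exact Ideal.mem_map_of_mem _
  let Q0 : Ideal (MvPolynomial (Fin r) k) := Ideal.span (Set.range X)
  have hQ0 : Q0.IsMaximal := by
    have h1 : Q0 = RingHom.ker (aeval (fun _ => (0 : k)) : MvPolynomial (Fin r) k →ₐ[k] k) := by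
      apply le_antisymm
      · rw [Ideal.span_le]
        rintro _ ⟨i, rfl⟩
        simp [RingHom.mem_ker]
      · intro p hp
        have : ∀ p : MvPolynomial (Fin r) k, p - C (aeval (fun _ => (0 : k)) p) ∈ Q0 := by
          intro p
          induction p using MvPolynomial.induction_on with
          | C a => simp
          | add p q hp hq => rw [map_add, map_add, add_sub_add_comm]; exact add_mem hp hq
          | mul_X p i hp =>
            have hX : (X i : MvPolynomial (Fin r) k) ∈ Q0 := Ideal.subset_span ⟨i, rfl⟩
            simpa using Ideal.mul_mem_left _ p hX
        have h2 := this p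
        rw [RingHom.mem_ker] at hp
        rw [hp] at h2
        simpa using h2
    rw [h1]
    exact RingHom.ker_isMaximal_of_surjective _ fun a => ⟨C a, by simp⟩
  have hres := core_top Q0 J0 hQ0 (e f) (e g) (by rwa [hJ]) ?_ (by rwa [← map_mul, hJ])
  · have hm : Q0.map (C : _ →+* MvPolynomial (Fin n) (MvPolynomial (Fin r) k)) ≤
        (Ideal.span (linF σ k '' W)).map e := by
      rw [Ideal.map_span, Ideal.span_le]
      rintro _ ⟨_, ⟨j, rfl⟩, rfl⟩
      rw [← heX]
      exact Ideal.mem_map_of_mem _ (Ideal.subset_span ⟨_, (bW j).2, rfl⟩)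
    obtain ⟨x, hx, hxe⟩ := (Ideal.mem_map_of_equiv e _).1 (hm hres)
    rwa [← e.injective hxe]
  · intro c hc
    induction hc using Submodule.span_induction with
    | mem x hx =>
      obtain ⟨j, rfl⟩ := hx
      rw [← heX, ← map_mul, hJ]
      exact hWf _ (bW j).2
    | zero => simp
    | add x y _ _ hx hy => rw [C_add, add_mul]; exact add_mem hx hy
    | smul a x _ hx => rw [smul_eq_mul, C_mul, mul_assoc]; exact Ideal.mul_mem_left _ _ hx

theorem AssP.congr_gen {R ι : Type*} [CommRing R] {P : Ideal R} {f g : ι → R}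
    (h : AssP P (Ideal.span (Set.range f))) (hfg : ∀ i, g i = f i) :
    AssP P (Ideal.span (Set.range g)) := by
  rwa [show g = f from funext hfg]

theorem AssP.of_mul' {R : Type*} [CommRing R] {P J Q : Ideal R} (h : AssP P J) (a : R)
    (ha : a ∉ P) (hJQ : J ≤ Q) (haQ : ∀ r ∈ Q, a * r ∈ J) : AssP P Q := by
  obtain ⟨hP, f, hf⟩ := h
  refine ⟨hP, f, fun r => ⟨fun hr => hJQ ((hf r).1 hr), fun hr => ?_⟩⟩
  have h1 : (a * r) * f ∈ J := by
    rw [mul_assoc]; exact haQ _ hr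
  exact (hP.mem_or_mem ((hf _).2 h1)).resolve_left ha

open MvPolynomial in
theorem prime_lin {k σ : Type*} [Field k] [Finite σ] {n : ℕ} (v : Fin n → (σ →₀ k))
    (hv : LinearIndependent k v) :
    (Ideal.span (Set.range fun i => linF σ k (v i))).IsPrime := by
  obtain ⟨N, b, hb⟩ := adapted_basis _ (Module.Basis.span hv)
  obtain ⟨φ, hφ⟩ := exists_coord b
  have h := prime_vars (⊥ : Ideal k) (Set.range (Sum.inl : Fin n → Fin n ⊕ Fin N))
  rw [Ideal.map_bot, bot_sup_eq] at h
  have h2 : Ideal.span (Set.range fun i => linF σ k (v i)) =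
      (Ideal.span ((X : _ → MvPolynomial (Fin n ⊕ Fin N) k) ''
        (Set.range (Sum.inl : Fin n → Fin n ⊕ Fin N)))).map φ := by
    rw [Ideal.map_span, ← Set.range_comp, ← Set.range_comp]
    congr 2
    ext1 i
    simp only [Function.comp]
    rw [hφ, hb, Module.Basis.span_apply]
  rw [h2]
  exact Ideal.map_isPrime_of_equiv φ

theorem exists_indep {k V : Type*} [Field k] [AddCommGroup V] [Module k V] (vx vy G : V)
    (h : LinearIndependent k ![vx, vy]) (hG : G ≠ 0) :
    ∃ H, LinearIndependent k ![G, H] := by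
  by_contra hc
  push Not at hc
  have h1 := hc vx
  have h2 := hc vy
  rw [LinearIndependent.pair_iff' hG] at h1 h2
  push Not at h1 h2
  obtain ⟨c, rfl⟩ := h1
  obtain ⟨d, rfl⟩ := h2
  rw [LinearIndependent.pair_iff] at h
  have h3 := h d (-c) (by rw [smul_smul, smul_smul, ← add_smul]; ring_nf; simp)
  have h4 := h 1 0 (by
    have : c = 0 := by simpa using h3.2
    simp [this])
  exact one_ne_zero h4.1

open MvPolynomial in
theorem main_chart2 {k σ : Type*} [Field k] [Finite σ] (vx vy G H : σ →₀ k)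
    (hxy : LinearIndependent k ![vx, vy]) {t : ℕ} (c e : Fin t → (σ →₀ k))
    (P : Ideal (MvPolynomial σ k))
    (hP : AssP P (Ideal.span (Set.range fun i =>
      linF σ k (c i) * linF σ k G - linF σ k (e i) * linF σ k H)))
    (hG : linF σ k G ∉ P) : P.height ≤ t := by
  by_cases hli : LinearIndependent k ![G, H]
  · exact main_chart G H hli c e P hP hG
  · have hG0 : G ≠ 0 := by rintro rfl; simp at hG
    rw [LinearIndependent.pair_iff' hG0] at hli
    push Not at hli
    obtain ⟨l, rfl⟩ := hli
    obtain ⟨H', hH'⟩ := exists_indep vx vy G hxy hG0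
    refine main_chart G H' hH' (fun i => c i - l • e i) (fun _ => 0) P ?_ hG
    refine AssP.congr_gen hP fun i => ?_
    simp only [map_sub, map_smul, map_zero, smul_eq_C_mul]
    ring

open MvPolynomial in
theorem not_dvd_lin {k σ : Type*} [Field k] [Finite σ] (vx vy : σ →₀ k)
    (hxy : LinearIndependent k ![vx, vy]) : linF σ k vx ∉ Ideal.span {linF σ k vy} := by
  intro hmem
  -- adapt coordinates and set the second variable to zero
  obtain ⟨N, b, hb⟩ := adapted_basis _ (Module.Basis.span hxy)
  obtain ⟨φ, hφ⟩ := exists_coord b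
  have e0 : linF σ k vx = φ (X (Sum.inl 0)) := by
    rw [hφ, hb, Module.Basis.span_apply]; rfl
  have e1 : linF σ k vy = φ (X (Sum.inl 1)) := by
    rw [hφ, hb, Module.Basis.span_apply]; rfl
  obtain ⟨c, hc⟩ := Ideal.mem_span_singleton'.1 hmem
  have h2 : φ.symm c * X (Sum.inl 1) = X (Sum.inl 0) := by
    apply φ.injective
    rw [map_mul, AlgEquiv.apply_symm_apply, ← e0, ← e1, hc]
  have h3 := congrArg (aeval (fun i => if i = Sum.inl 1 then (0 : k) else 1)) h2
  simp at h3

open MvPolynomial in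
theorem case_a {k σ : Type*} [Field k] [Finite σ] (vx vy : σ →₀ k)
    (hxy : LinearIndependent k ![vx, vy]) {t : ℕ} (va vb : Fin t → (σ →₀ k))
    (P : Ideal (MvPolynomial σ k))
    (hP : AssP P (Ideal.span (Set.range fun i =>
      linF σ k (va i) * linF σ k vx + linF σ k (vb i) * linF σ k vy)))
    (hxP : linF σ k vx ∈ P) (hyP : linF σ k vy ∈ P)
    (j : Fin t) (hj : linF σ k (va j) ∉ P) : P.height ≤ t := by
  classical
  set x := linF σ k vx with hx
  set y := linF σ k vy with hy
  set q : Fin t → MvPolynomial σ k := fun i => linF σ k (va i) * x + linF σ k (vb i) * y with hq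
  set J := Ideal.span (Set.range q) with hJ
  let c : Fin t → (σ →₀ k) := fun i => if i = j then vx else vb i
  let e : Fin t → (σ →₀ k) := fun i => if i = j then -vy else va i
  let g : Fin t → MvPolynomial σ k := fun i =>
      linF σ k (c i) * linF σ k (va j) - linF σ k (e i) * linF σ k (vb j)
  let K := Ideal.span (Set.range g)
  have hgj : g j = q j := by
    simp only [g, c, e, if_true, hq, map_neg, ← hx, ← hy]; ring
  have hgi : ∀ i, i ≠ j → g i =
      linF σ k (vb i) * linF σ k (va j) - linF σ k (va i) * linF σ k (vb j) := by
    intro i hi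
    simp [g, c, e, hi]
  have hgK : ∀ i, g i ∈ K := fun i => Ideal.subset_span ⟨i, rfl⟩
  have hqJ : ∀ i, q i ∈ J := fun i => Ideal.subset_span ⟨i, rfl⟩
  have fin : AssP P K → P.height ≤ t := fun h => main_chart2 vx vy (va j) (vb j) hxy c e P h hj
  by_cases hone : ∀ i, i = j
  · apply fin
    have : K = J := by
      have : g = q := by
        funext i; rw [hone i, hgj]
      simp only [K, this, hJ]
    rwa [this]
  push Not at hone
  obtain ⟨i0, hi0⟩ := hone
  have ht : 2 ≤ t := by
    have h1 := i0.2
    have h2 := j.2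
    have h3 : (i0 : ℕ) ≠ j := fun h => hi0 (Fin.ext h)
    omega
  let J' : Ideal (MvPolynomial σ k) :=
    { carrier := {r | y * r ∈ J}
      add_mem' := fun {a b} ha hb => by
        simp only [Set.mem_ofPred_eq] at *; rw [mul_add]; exact add_mem ha hb
      zero_mem' := by simp
      smul_mem' := fun a b hb => by
        simp only [Set.mem_ofPred_eq, smul_eq_mul] at *
        rw [mul_left_comm]; exact J.mul_mem_left _ hb }
  have hJ' : ∀ r, r ∈ J' ↔ y * r ∈ J := fun r => Iff.rfl
  have hsy : Ideal.span (Set.range fun i : Fin 1 => linF σ k ((![vy] : Fin 1 → (σ →₀ k)) i))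
      = Ideal.span {y} := by
    congr 1
    ext z
    simp [hy, eq_comm]
  have hyne : vy ≠ 0 := by
    have := hxy.ne_zero 1
    simpa using this
  have hypr : (Ideal.span {y}).IsPrime := by
    rw [← hsy]
    apply prime_lin
    rw [linearIndependent_unique_iff]
    simpa using hyne
  rcases hP.split y J' hJ' with h | h
  · apply fin
    refine h.of_mul (linF σ k (va j)) hj ?_ ?_
    · rw [Ideal.span_le]
      rintro _ ⟨i, rfl⟩
      change y * g i ∈ J
      by_cases hi : i = j
      · rw [hi, hgj]; exact J.mul_mem_left _ (hqJ j)
      · have : y * g i = linF σ k (va j) * q i - linF σ k (va i) * q j := by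
          rw [hgi i hi]; simp only [hq]; ring
        rw [this]
        exact sub_mem (J.mul_mem_left _ (hqJ i)) (J.mul_mem_left _ (hqJ j))
    · have key : ∀ z ∈ J, ∃ s, ∃ u ∈ K, linF σ k (va j) * z = s * q j + y * u := by
        intro z hz
        induction hz using Submodule.span_induction with
        | mem z hz =>
          obtain ⟨i, rfl⟩ := hz
          by_cases hi : i = j
          · subst hi
            exact ⟨linF σ k (va i), 0, K.zero_mem, by ring⟩
          · refine ⟨linF σ k (va i), g i, hgK i, ?_⟩
            rw [hgi i hi]; simp only [hq]; ring
        | zero => exact ⟨0, 0, K.zero_mem, by ring⟩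
        | add z w _ _ hz hw =>
          obtain ⟨s, u, hu, h1⟩ := hz
          obtain ⟨s', u', hu', h2⟩ := hw
          exact ⟨s + s', u + u', add_mem hu hu', by linear_combination h1 + h2⟩
        | smul a z _ hz =>
          obtain ⟨s, u, hu, h1⟩ := hz
          exact ⟨a * s, a * u, K.mul_mem_left _ hu, by rw [smul_eq_mul]; linear_combination a * h1⟩
      intro r hr
      obtain ⟨s, u, hu, h1⟩ := key _ ((hJ' r).1 hr)
      have hym : y ∈ Ideal.span {y} := Ideal.subset_span rfl
      have h2 : s * q j ∈ Ideal.span {y} := by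
        have : s * q j = (linF σ k (va j) * r - u) * y := by linear_combination -h1
        rw [this]; exact Ideal.mul_mem_left _ _ hym
      have h3 : q j ∉ Ideal.span {y} := by
        intro h3
        have h4 : linF σ k (va j) * x ∈ Ideal.span {y} := by
          have : linF σ k (va j) * x = q j - linF σ k (vb j) * y := by simp only [hq]; ring
          rw [this]; exact sub_mem h3 (Ideal.mul_mem_left _ _ hym)
        rcases hypr.mem_or_mem h4 with h5 | h5
        · apply hj
          have : Ideal.span {y} ≤ P := by rw [Ideal.span_le]; simpa using hyP
          exact this h5
        · exact not_dvd_lin vx vy hxy h5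
      obtain ⟨s', rfl⟩ := Ideal.mem_span_singleton'.1 ((hypr.mem_or_mem h2).resolve_right h3)
      have hy0 : y ≠ 0 := by
        intro h0
        apply h3
        exfalso
        apply not_dvd_lin vy vx (LinearIndependent.pair_symm_iff.1 hxy)
        rw [← hy, h0]; exact zero_mem _
      have h6 : linF σ k (va j) * r = s' * q j + u := by
        apply mul_left_cancel₀ hy0
        linear_combination h1
      rw [h6, ← hgj]
      exact add_mem (K.mul_mem_left _ (hgK j)) hu
  · let Q : Ideal (MvPolynomial σ k) :=
      Ideal.span (Set.range fun i : Fin 2 => linF σ k ((![vx, vy] : Fin 2 → (σ →₀ k)) i))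
    have hQpr : Q.IsPrime := prime_lin _ hxy
    have hxQ : x ∈ Q := Ideal.subset_span ⟨0, rfl⟩
    have hyQ : y ∈ Q := Ideal.subset_span ⟨1, rfl⟩
    have hyJ : y ∈ J ⊔ Ideal.span {y} := Ideal.mem_sup_right (Ideal.subset_span rfl)
    have h2 : AssP P Q := by
      refine h.of_mul' (linF σ k (va j)) hj (sup_le ?_ ?_) ?_
      · rw [Ideal.span_le]
        rintro _ ⟨i, rfl⟩
        exact add_mem (Q.mul_mem_left _ hxQ) (Q.mul_mem_left _ hyQ)
      · rw [Ideal.span_le]; simpa using hyQ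
      · intro r hr
        induction hr using Submodule.span_induction with
        | mem z hz =>
          obtain ⟨i, rfl⟩ := hz
          fin_cases i
          · have : linF σ k (va j) * x = q j - linF σ k (vb j) * y := by simp only [hq]; ring
            change linF σ k (va j) * x ∈ _
            rw [this]
            exact sub_mem (Ideal.mem_sup_left (hqJ j)) (Ideal.mul_mem_left _ _ hyJ)
          · exact Ideal.mul_mem_left _ _ hyJ
        | zero => simp
        | add z w _ _ hz hw => rw [mul_add]; exact add_mem hz hw
        | smul a z _ hz => rw [smul_eq_mul, mul_left_comm]; exact Ideal.mul_mem_left _ _ hz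
    have h3 := h2.eq_of_prime (Or.inl hQpr)
    refine (height_le_of_prime_span _ hP.prime h3).trans ?_
    simpa using ht

open MvPolynomial in
theorem exists_lin {k σ : Type*} [Field k] {p : MvPolynomial σ k} (hp : p.IsHomogeneous 1) :
    ∃ v, linF σ k v = p := by
  have h : p ∈ homogeneousSubmodule σ k 1 := hp
  rw [homogeneousSubmodule_one_eq_span_X, ← Finsupp.range_linearCombination] at h
  exact h

/-- Let `x, y` be linearly independent linear forms and
`J = (q_1, …, q_t)` an ideal generated by quadrics with `J ⊆ (x, y)`, where
`q_i = a_i x + b_i y` with `a_i, b_i` linear forms. Set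
`m = (x, y, a_1, …, a_t, b_1, …, b_t)`. Then every associated prime `p ≠ m` of `S/J`
satisfies `height p ≤ t`. -/
theorem height_le_of_assoc_prime_of_quadrics_in_linear_prime
    (k : Type u) [Field k] (N : ℕ) (t : ℕ)
    (x y : MvPolynomial (Fin N) k)
    (hx : x.IsHomogeneous 1) (hy : y.IsHomogeneous 1)
    (hxy : LinearIndependent k ![x, y])
    (q a b : Fin t → MvPolynomial (Fin N) k)
    (hq2 : ∀ i, (q i).IsHomogeneous 2)
    (ha : ∀ i, (a i).IsHomogeneous 1) (hb : ∀ i, (b i).IsHomogeneous 1)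
    (hqab : ∀ i, q i = a i * x + b i * y)
    (J : Ideal (MvPolynomial (Fin N) k))
    (hJ : J = Ideal.span (Set.range q))
    (hJxy : J ≤ Ideal.span {x, y})
    (m : Ideal (MvPolynomial (Fin N) k))
    (hm : m = Ideal.span ({x, y} ∪ Set.range a ∪ Set.range b))
    (p : Ideal (MvPolynomial (Fin N) k))
    (hp : IsAssociatedPrime p (MvPolynomial (Fin N) k ⧸ J))
    (hpm : p ≠ m) :
    p.heightENat ≤ t := by

  obtain ⟨vx, rfl⟩ := exists_lin hx
  obtain ⟨vy, rfl⟩ := exists_lin hy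
  choose va hva using fun i => exists_lin (ha i)
  choose vb hvb using fun i => exists_lin (hb i)
  obtain rfl : (fun i => linF (Fin N) k (va i)) = a := funext hva
  obtain rfl : (fun i => linF (Fin N) k (vb i)) = b := funext hvb
  obtain rfl : q = fun i => linF (Fin N) k (va i) * linF (Fin N) k vx +
    linF (Fin N) k (vb i) * linF (Fin N) k vy := funext hqab
  have hli : LinearIndependent k ![vx, vy] := by
    apply LinearIndependent.of_comp (linF (Fin N) k)
    have : (linF (Fin N) k ∘ ![vx, vy]) = ![linF (Fin N) k vx, linF (Fin N) k vy] := by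
      ext1 i
      fin_cases i <;> rfl
    rw [this]
    exact hxy
  have hP : AssP p J := by
    rw [isAssociatedPrime_iff] at hp
    obtain ⟨hpr, z, hz⟩ := hp
    obtain ⟨f, rfl⟩ := Ideal.Quotient.mk_surjective z
    refine ⟨hpr, f, fun r => ?_⟩
    rw [hz, Submodule.mem_colon_singleton, Submodule.mem_bot, ← Ideal.Quotient.eq_zero_iff_mem,
      map_mul]
    rfl
  have hht : p.heightENat ≤ p.height := by
    have hpr := hP.prime
    refine (iInf₂_le (⟨p, hpr⟩ : PrimeSpectrum _) le_rfl).trans ?_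
    rw [← PrimeSpectrum.height_eq_orderHeight]
  refine hht.trans ?_
  by_cases hxP : linF (Fin N) k vx ∈ p
  swap
  · rw [hJ] at hP
    refine main_chart vx vy hli va (fun i => - vb i) p ?_ hxP
    refine AssP.congr_gen hP fun i => ?_
    rw [map_neg]; ring
  by_cases hyP : linF (Fin N) k vy ∈ p
  swap
  · rw [hJ] at hP
    refine main_chart vy vx (LinearIndependent.pair_symm_iff.1 hli) vb (fun i => - va i) p ?_ hyP
    refine AssP.congr_gen hP fun i => ?_
    rw [map_neg]; ring
  by_cases haP : ∀ j, linF (Fin N) k (va j) ∈ p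
  swap
  · push Not at haP
    obtain ⟨j, hj⟩ := haP
    rw [hJ] at hP
    exact case_a vx vy hli va vb p hP hxP hyP j hj
  by_cases hbP : ∀ j, linF (Fin N) k (vb j) ∈ p
  swap
  · push Not at hbP
    obtain ⟨j, hj⟩ := hbP
    rw [hJ] at hP
    refine case_a vy vx (LinearIndependent.pair_symm_iff.1 hli) vb va p ?_ hyP hxP j hj
    refine AssP.congr_gen hP fun i => ?_
    exact add_comm _ _
  exfalso
  apply hpm
  let W : Submodule k (Fin N →₀ k) := Submodule.span k ({vx, vy} ∪ Set.range va ∪ Set.range vb)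
  have hvx : vx ∈ W := Submodule.subset_span (by simp)
  have hvy : vy ∈ W := Submodule.subset_span (by simp)
  have hvaW : ∀ i, va i ∈ W := fun i => Submodule.subset_span (Or.inl (Or.inr ⟨i, rfl⟩))
  have hvbW : ∀ i, vb i ∈ W := fun i => Submodule.subset_span (Or.inr ⟨i, rfl⟩)
  have hmp : m ≤ p := by
    rw [hm, Ideal.span_le]
    rintro z ((hz | ⟨i, rfl⟩) | ⟨i, rfl⟩)
    · rcases hz with rfl | rfl
      · exact hxP
      · exact hyP
    · exact haP i
    · exact hbP i
  have hWm : ∀ v ∈ W, linF (Fin N) k v ∈ m := by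
    intro v hv
    induction hv using Submodule.span_induction with
    | mem v hv =>
      rw [hm]
      apply Ideal.subset_span
      rcases hv with (hv | ⟨i, rfl⟩) | ⟨i, rfl⟩
      · rcases hv with rfl | rfl
        · exact Or.inl (Or.inl (Or.inl rfl))
        · exact Or.inl (Or.inl (Or.inr rfl))
      · exact Or.inl (Or.inr ⟨i, rfl⟩)
      · exact Or.inr ⟨i, rfl⟩
    | zero => simp
    | add v w _ _ h1 h2 => rw [map_add]; exact add_mem h1 h2
    | smul c v _ h1 =>
      rw [map_smul, MvPolynomial.smul_eq_C_mul]; exact Ideal.mul_mem_left _ _ h1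
  refine le_antisymm (fun g hg => ?_) hmp
  obtain ⟨hpr, f, hf⟩ := hP
  have hfJ : f ∉ J := fun h => hpr.ne_top ((Ideal.eq_top_iff_one _).2 ((hf 1).2 (by simpa using h)))
  have hadj : ∀ v ∈ W, linF (Fin N) k v ∈ Algebra.adjoin k (linF (Fin N) k '' W) :=
    fun v hv => Algebra.subset_adjoin ⟨v, hv, rfl⟩
  have hle : Ideal.span (linF (Fin N) k '' W) ≤ m := by
    rw [Ideal.span_le]
    rintro _ ⟨v, hv, rfl⟩
    exact hWm v hv
  apply hle
  rw [hJ] at hf hfJ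
  refine top_case W _ (fun i => ?_) f g hfJ (fun v hv => (hf _).1 (hmp (hWm v hv))) ((hf g).1 hg)
  exact add_mem (mul_mem (hadj _ (hvaW i)) (hadj _ hvx)) (mul_mem (hadj _ (hvbW i)) (hadj _ hvy))
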